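/- Let n ∈ ℕ, let H ⊆ ℝ with |H| ≥ n+2, and let ω = (ω_1,…,ω_n) be an n-dimensional positive Chebyshev system over H. Let m ∈ ℕ with n ≤ m ≤ |H|−1, let x_0 < ⋯ < x_m be elements of H, and let f : {x_0,…,x_m} → ℝ. If Φ_{(ω,f)}(x_i,…,x_{i+n}) ≥ 0 for all 0 ≤ i ≤ m−n, then for all indices 0 ≤ i_0 < i_1 < ⋯ < i_n ≤ m one has Φ_{(ω,f)}(x_{i_0},…,x_{i_n}) ≥ 0; that is, if f is ω-convex on every set of n+1 consecutive points {x_i,…,x_{i+n}}, then f is ω-convex on {x_0,…,x_m}. -/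

import Mathlib

/-- `Phi ω x` is the determinant `det(ωᵢ(xⱼ))` of an `n`-tuple of functions
evaluated at an `n`-tuple of points. -/
noncomputable def Phi {n : ℕ} (ω : Fin n → ℝ → ℝ) (x : Fin n → ℝ) : ℝ :=
  (Matrix.of fun i j => ω i (x j)).det

/-- `ω` is an `n`-dimensional positive Chebyshev system over `H`:
`Phi ω` is positive on all strictly increasing `n`-tuples of elements of `H`. -/
def IsPosChebyshev {n : ℕ} (ω : Fin n → ℝ → ℝ) (H : Set ℝ) : Prop :=
  ∀ x : Fin n → ℝ, StrictMono x → (∀ j, x j ∈ H) → 0 < Phi ω x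

lemma Phi_snoc_expand {n : ℕ} (ω : Fin n → ℝ → ℝ) (f : ℝ → ℝ) (x : Fin (n + 1) → ℝ) :
    Phi (Fin.snoc ω f : Fin (n + 1) → ℝ → ℝ) x =
      ∑ j : Fin (n + 1), (-1 : ℝ) ^ (n + j.1) * f (x j) * Phi ω (fun i => x (j.succAbove i)) := by
  unfold Phi
  rw [Matrix.det_succ_row _ (Fin.last n)]
  refine Finset.sum_congr rfl fun j _ => ?_
  congr 1
  · simp
  · congr 1
    ext a b
    simp [Matrix.submatrix]

lemma Phi_snoc_self {n : ℕ} (ω : Fin n → ℝ → ℝ) (i : Fin n) (x : Fin (n + 1) → ℝ) :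
    Phi (Fin.snoc ω (ω i) : Fin (n + 1) → ℝ → ℝ) x = 0 := by
  unfold Phi
  apply Matrix.det_zero_of_row_eq (i := i.castSucc) (j := Fin.last n) (Fin.castSucc_lt_last i).ne
  ext b
  simp

lemma Phi_snoc_sub {n : ℕ} (ω : Fin n → ℝ → ℝ) (f : ℝ → ℝ) (c : Fin n → ℝ)
    (x : Fin (n + 1) → ℝ) :
    Phi (Fin.snoc ω (fun t => f t - ∑ i, c i * ω i t) : Fin (n + 1) → ℝ → ℝ) x =
      Phi (Fin.snoc ω f : Fin (n + 1) → ℝ → ℝ) x := by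
  have h : ∑ i, c i * Phi (Fin.snoc ω (ω i) : Fin (n + 1) → ℝ → ℝ) x = 0 :=
    Finset.sum_eq_zero fun i _ => by rw [Phi_snoc_self, mul_zero]
  rw [← sub_zero (Phi (Fin.snoc ω f : Fin (n + 1) → ℝ → ℝ) x), ← h]
  simp only [Phi_snoc_expand, Finset.mul_sum]
  rw [Finset.sum_comm, ← Finset.sum_sub_distrib]
  refine Finset.sum_congr rfl fun j _ => ?_
  rw [mul_sub, sub_mul, Finset.mul_sum, Finset.sum_mul]
  congr 1
  refine Finset.sum_congr rfl fun i _ => ?_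
  ring

lemma exists_interp {n : ℕ} (ω : Fin n → ℝ → ℝ) (f : ℝ → ℝ) (x : Fin n → ℝ)
    (h : 0 < Phi ω x) : ∃ c : Fin n → ℝ, ∀ j, ∑ i, c i * ω i (x j) = f (x j) := by
  unfold Phi at h
  set A : Matrix (Fin n) (Fin n) ℝ := Matrix.of fun i j => ω i (x j) with hA
  refine ⟨Matrix.vecMul (fun j => f (x j)) A⁻¹, fun j => ?_⟩
  have h2 : Matrix.vecMul (Matrix.vecMul (fun j => f (x j)) A⁻¹) A = fun j => f (x j) := by
    rw [Matrix.vecMul_vecMul, Matrix.nonsing_inv_mul _ (isUnit_iff_ne_zero.2 h.ne'),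
      Matrix.vecMul_one]
  exact congrFun h2 j

/-- One-step refinement: the case of `n + 2` points. -/
lemma step {n : ℕ} (ω : Fin n → ℝ → ℝ) (H : Set ℝ) (hω : IsPosChebyshev ω H)
    (f : ℝ → ℝ) (y : Fin (n + 2) → ℝ) (hy : StrictMono y) (hyH : ∀ j, y j ∈ H)
    (k : Fin (n + 2)) (hk0 : k ≠ 0) (hkl : k ≠ Fin.last (n + 1))
    (h0 : 0 ≤ Phi (Fin.snoc ω f : Fin (n + 1) → ℝ → ℝ) (fun j => y j.succ))
    (h1 : 0 ≤ Phi (Fin.snoc ω f : Fin (n + 1) → ℝ → ℝ) (fun j => y j.castSucc)) :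
    0 ≤ Phi (Fin.snoc ω f : Fin (n + 1) → ℝ → ℝ) (fun j => y (k.succAbove j)) := by
  have hmid : 0 < Phi ω (fun j : Fin n => y j.castSucc.succ) :=
    hω _ (fun a b hab => hy (by simpa using hab)) (fun j => hyH _)
  obtain ⟨c, hc⟩ := exists_interp ω f _ hmid
  rw [← Phi_snoc_sub ω f c] at h0 h1 ⊢
  set g : ℝ → ℝ := fun t => f t - ∑ i, c i * ω i t with hg
  have hg0 : ∀ j : Fin n, g (y j.castSucc.succ) = 0 := fun j => by simp [hg, hc]
  have hgz : ∀ j : Fin (n + 2), j ≠ 0 → j ≠ Fin.last (n + 1) → g (y j) = 0 := by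
    intro j hj0 hjl
    obtain ⟨a, rfl⟩ := Fin.exists_succ_eq.2 hj0
    have : a ≠ Fin.last n := fun h => hjl (by rw [h]; rfl)
    obtain ⟨b, rfl⟩ := Fin.exists_castSucc_eq.2 this
    exact hg0 b
  rw [Phi_snoc_expand] at h0 h1 ⊢
  rw [Finset.sum_eq_single (Fin.last n)] at h0
  rotate_left
  · intro b _ hb
    rw [hgz _ (Fin.succ_ne_zero b) (by rw [← Fin.succ_last]; simpa using hb)]; simp
  · simp
  rw [Finset.sum_eq_single 0] at h1
  rotate_left
  · intro b _ hb
    rw [hgz _ (by simpa using hb) (Fin.castSucc_lt_last b).ne]; simp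
  · simp
  have e0 : (fun i : Fin n => y ((Fin.last n).succAbove i).succ) = fun j => y j.castSucc.succ := by
    simp
  have e1 : (fun i : Fin n => y ((0 : Fin (n+1)).succAbove i).castSucc)
      = fun j => y j.castSucc.succ := by
    simp
  rw [e0] at h0
  rw [e1] at h1
  have h0' := nonneg_of_mul_nonneg_left h0 hmid
  have h1' := nonneg_of_mul_nonneg_left h1 hmid
  refine Finset.sum_nonneg fun j _ => mul_nonneg ?_ (le_of_lt (hω _ ?_ fun _ => hyH _))
  · by_cases hj0 : j = 0
    · subst hj0
      rw [Fin.succAbove_ne_zero_zero hk0]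
      simpa using h1'
    by_cases hjl : j = Fin.last n
    · subst hjl
      rw [Fin.succAbove_ne_last_last hkl]
      simpa using h0'
    rw [hgz _ (Fin.succAbove_ne_zero hk0 hj0) (Fin.succAbove_ne_last hkl hjl)]; simp
  · exact fun a b hab => hy (Fin.strictMono_succAbove _ (Fin.strictMono_succAbove _ hab))

/-- Inserting a missing index. -/
lemma exists_insert {n m : ℕ} (idx : Fin (n + 1) → Fin (m + 1)) (hidx : StrictMono idx)
    (l : Fin (m + 1)) (hl : ∀ j, idx j ≠ l) :
    ∃ (y : Fin (n + 2) → Fin (m + 1)) (k : Fin (n + 2)), StrictMono y ∧ y k = l ∧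
      ∀ j, y (k.succAbove j) = idx j := by
  classical
  set s : Finset (Fin (m + 1)) := insert l (Finset.univ.image idx) with hs
  have hcard : s.card = n + 2 := by
    rw [hs, Finset.card_insert_of_notMem (by simpa using hl),
      Finset.card_image_of_injective _ hidx.injective]
    simp
  have hr := Finset.range_orderEmbOfFin s hcard
  have hl' : l ∈ Set.range (s.orderEmbOfFin hcard) := by rw [hr]; simp [hs]
  obtain ⟨k, hk⟩ := hl'
  refine ⟨s.orderEmbOfFin hcard, k, (s.orderEmbOfFin hcard).strictMono, hk, ?_⟩
  have hm : StrictMono (fun j => s.orderEmbOfFin hcard (k.succAbove j)) :=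
    (s.orderEmbOfFin hcard).strictMono.comp (Fin.strictMono_succAbove k)
  have hc2 : (Finset.univ.image idx).card = n + 1 := by
    rw [Finset.card_image_of_injective _ hidx.injective]; simp
  have a1 := Finset.orderEmbOfFin_unique hc2 (f := idx) (by simp) hidx
  have a2 := Finset.orderEmbOfFin_unique hc2
    (f := fun j => s.orderEmbOfFin hcard (k.succAbove j)) (by
      intro j
      have h1 := Finset.orderEmbOfFin_mem s hcard (k.succAbove j)
      replace h1 := Finset.mem_insert.1 h1
      refine h1.resolve_left fun h => ?_
      rw [← hk] at h
      exact Fin.succAbove_ne k j ((s.orderEmbOfFin hcard).injective h)) hm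
  intro j
  exact congrFun (a2.trans a1.symm) j

/-- **Corollary 2.** If `f` is `ω`-convex on every window of `n+1` consecutive points
of `x₀ < ⋯ < x_m` — i.e. `Φ_{(ω,f)}(x_i,…,x_{i+n}) ≥ 0` for `0 ≤ i ≤ m−n` — then `f` is
`ω`-convex on `{x₀,…,x_m}`: `Φ_{(ω,f)}(x_{i₀},…,x_{iₙ}) ≥ 0` for all `i₀ < ⋯ < iₙ`. -/
theorem omegaConvex_of_consecutive_windows
    (n : ℕ) (hn : 0 < n) (H : Set ℝ) (hH : (↑(n + 2) : ℕ∞) ≤ H.encard)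
    (ω : Fin n → ℝ → ℝ) (hω : IsPosChebyshev ω H)
    (m : ℕ) (hnm : n ≤ m) (hm : (↑(m + 1) : ℕ∞) ≤ H.encard)
    (x : Fin (m + 1) → ℝ) (hx : StrictMono x) (hxH : ∀ i, x i ∈ H) (f : ℝ → ℝ)
    (hwin : ∀ i : Fin (m - n + 1),
      0 ≤ Phi (Fin.snoc ω f) (fun j : Fin (n + 1) =>
        x ⟨i.1 + j.1, by have h1 := i.2; have h2 := j.2; omega⟩)) :
    ∀ idx : Fin (n + 1) → Fin (m + 1), StrictMono idx →
      0 ≤ Phi (Fin.snoc ω f) (fun j => x (idx j)) := by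
  suffices h : ∀ d : ℕ, ∀ idx : Fin (n + 1) → Fin (m + 1), StrictMono idx →
      (idx (Fin.last n)).1 - (idx 0).1 = d →
      0 ≤ Phi (Fin.snoc ω f : Fin (n + 1) → ℝ → ℝ) (fun j => x (idx j)) from
    fun idx hidx => h _ idx hidx rfl
  intro d
  induction d using Nat.strong_induction_on with
  | _ d ih =>
    intro idx hidx hd
    by_cases hgap : ∃ l : Fin (m + 1), idx 0 < l ∧ l < idx (Fin.last n) ∧ ∀ j, idx j ≠ l
    · obtain ⟨l, hl0, hll, hl⟩ := hgap
      obtain ⟨y, k, hy, hyk, hyi⟩ := exists_insert idx hidx l hl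
      have hk0 : k ≠ 0 := by
        rintro rfl
        have h1 := hyi 0
        have h2 : y 0 < y ((0 : Fin (n + 2)).succAbove 0) := hy (by simp)
        rw [h1, hyk] at h2
        exact absurd h2 hl0.not_gt
      have hkl : k ≠ Fin.last (n + 1) := by
        rintro rfl
        have h1 := hyi (Fin.last n)
        have h2 : y ((Fin.last (n + 1)).succAbove (Fin.last n)) < y (Fin.last (n + 1)) :=
          hy (by rw [Fin.succAbove_last]; exact Fin.castSucc_lt_last _)
        rw [h1, hyk] at h2
        exact absurd h2 hll.not_gt
      have e0 : y 0 = idx 0 := by rw [← hyi 0, Fin.succAbove_ne_zero_zero hk0]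
      have e1 : y (Fin.last (n + 1)) = idx (Fin.last n) := by
        rw [← hyi (Fin.last n), Fin.succAbove_ne_last_last hkl]
      have hlt : (idx 0).1 < (idx (Fin.last n)).1 := hl0.trans hll
      have key := step ω H hω f (fun j => x (y j)) (hx.comp hy) (fun j => hxH _) k hk0 hkl
        (ih ((y (Fin.last n).succ).1 - (y (Fin.succ 0)).1) (by
            have h3 : (y 0).1 < (y (Fin.succ 0)).1 := hy (Fin.succ_pos _)
            rw [Fin.succ_last, e1]
            rw [e0] at h3
            omega) (fun j => y j.succ) (hy.comp (Fin.strictMono_succ)) rfl)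
        (ih ((y (Fin.last n).castSucc).1 - (y (Fin.castSucc 0)).1) (by
            have h3 : (y (Fin.last n).castSucc).1 < (y (Fin.last (n + 1))).1 :=
              hy (Fin.castSucc_lt_last _)
            rw [Fin.castSucc_zero, e0]
            rw [e1] at h3
            omega) (fun j => y j.castSucc) (hy.comp (Fin.strictMono_castSucc)) rfl)
      simpa only [hyi] using key
    · push Not at hgap
      -- no gap: consecutive
      have hcons : ∀ j : ℕ, ∀ hj : j < n + 1, (idx ⟨j, hj⟩).1 = (idx 0).1 + j := by
        intro j
        induction j with
        | zero => intro hj; rfl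
        | succ j ihj =>
          intro hj
          have h1 := ihj (by omega)
          have h2 : (idx ⟨j, by omega⟩).1 < (idx ⟨j + 1, hj⟩).1 := hidx (by simp)
          by_contra hne
          have h4 : (idx ⟨j + 1, hj⟩).1 ≤ (idx (Fin.last n)).1 :=
            hidx.monotone (Fin.le_last _)
          have h5 := (idx (Fin.last n)).2
          obtain ⟨i, hi⟩ := hgap ⟨(idx 0).1 + j + 1, by omega⟩
            (by rw [Fin.lt_def]; simp only; omega) (by rw [Fin.lt_def]; simp only; omega)
          have hi' : (idx i).1 = (idx 0).1 + j + 1 := by rw [hi]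
          have a1 : (⟨j, by omega⟩ : Fin (n + 1)) < i := hidx.lt_iff_lt.1 (by
            rw [Fin.lt_def]; omega)
          have a2 : i < (⟨j + 1, hj⟩ : Fin (n + 1)) := hidx.lt_iff_lt.1 (by
            rw [Fin.lt_def]; omega)
          rw [Fin.lt_def] at a1 a2
          simp only at a1 a2
          omega
      have hb : (idx 0).1 + n < m + 1 := by
        have h1 := hcons n (by omega)
        have h2 := (idx ⟨n, by omega⟩).2
        omega
      have key := hwin ⟨(idx 0).1, by omega⟩
      have he : (fun j => x (idx j)) = fun j : Fin (n + 1) =>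
          x ⟨(idx 0).1 + j.1, by have h2 := j.2; omega⟩ :=
        funext fun j => congrArg x (Fin.ext (hcons j.1 j.2))
      rw [he]
      exact key
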